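/- Let M be a von Neumann algebra with no central summands of type I₁ and let ξ be a complex scalar with ξ ≠ 0 and ξ ≠ 1. If Φ : M → M is a nonlinear ξ-Lie derivation, then Φ is an additive derivation and Φ(ξT) = ξΦ(T) for all T ∈ M. -/

import Mathlib

variable {H : Type*} [NormedAddCommGroup H] [InnerProductSpace ℂ H] [CompleteSpace H]

/-- `P` is a projection (self-adjoint idempotent) belonging to the
von Neumann algebra `M`. -/
def VNProjection (M : VonNeumannAlgebra H) (P : H →L[ℂ] H) : Prop :=
  P ∈ M ∧ IsSelfAdjoint P ∧ P * P = P

/-- `Z` is a central projection of `M`: a projection in `M` commuting with every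
element of `M`. -/
def VNCentralProjection (M : VonNeumannAlgebra H) (Z : H →L[ℂ] H) : Prop :=
  VNProjection M Z ∧ ∀ T ∈ M, Z * T = T * Z

/-- `P` is core-free: the only central projection `Q` of `M` with `Q ≤ P` is `0`. -/
def VNCoreFree (M : VonNeumannAlgebra H) (P : H →L[ℂ] H) : Prop :=
  ∀ Q, VNCentralProjection M Q → Q * P = Q → Q = 0

/-- `Z` is the central carrier of `A`: the smallest central projection of `M`
with `Z * A = A`. -/
def VNCentralCarrier (M : VonNeumannAlgebra H) (A Z : H →L[ℂ] H) : Prop :=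
  VNCentralProjection M Z ∧ Z * A = A ∧
    ∀ Q, VNCentralProjection M Q → Q * A = A → Z * Q = Z

/-- `M` has no central summands of type I₁: for every nonzero central projection `Z`
there are `A, B ∈ M` with `Z * (A * B - B * A) ≠ 0`. -/
def VNNoTypeI1 (M : VonNeumannAlgebra H) : Prop :=
  ∀ Z, VNCentralProjection M Z → Z ≠ 0 → ∃ A ∈ M, ∃ B ∈ M, Z * (A * B - B * A) ≠ 0

/-!
For fixed `c`, the `ξ`-Lie derivation rule turns the additivity defect of `Φ` at `(a, b)` into its
defect at `([a, c]_ξ, [b, c]_ξ)`. Choosing `c` in the Peirce corners of a projection `P` makes one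
of these two brackets vanish, so the defect is killed by the off-diagonal corners. Modulo the ideal
annihilating the corner `P M (1 - P)`, both off-diagonal corners are faithful, and `Φ` is additive.
These ideals, for varying `P`, intersect in zero: the part of the algebra annihilated by all of them
lies under a central projection where every projection is central, and since projections span a
dense subspace, that summand is abelian, hence zero.

Once `Φ` is additive, comparing the rule at `(a, b)` and at `(b, a)` for `ξ ≠ -1` expresses the
Leibniz defect through `Φ 1`, and the cocycle identity for that defect forces `Φ 1 = 0`. For
`ξ = -1`, `Φ` is a Jordan derivation of a semiprime ring, to which Brešar's theorem applies.
-/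

/-! ### Jordan derivations of semiprime rings -/

/-- A ring is semiprime if it has no nonzero `x` with `x R x = 0`. -/
def IsSemiprimeRing (R : Type*) [Ring R] : Prop :=
  ∀ x : R, (∀ y, x * y * x = 0) → x = 0

/-- The failure of a map to satisfy the Leibniz rule at a pair of elements. -/
def leibnizDefect {R : Type*} [Ring R] (D : R → R) (a b : R) : R :=
  D (a * b) - D a * b - a * D b

/-- A Jordan derivation, in the form without division by `2`. -/
def IsJordanDerivation {R : Type*} [Ring R] (D : R →+ R) : Prop :=
  ∀ a b, D (a * b + b * a) = D a * b + a * D b + (D b * a + b * D a)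

section Semiprime

variable {R : Type*} [Ring R]

theorem leibnizDefect_eq_zero_iff {D : R → R} {a b : R} :
    leibnizDefect D a b = 0 ↔ D (a * b) = D a * b + a * D b := by
  rw [leibnizDefect, sub_sub, sub_eq_zero]

theorem leibnizDefect_add_left (D : R →+ R) (a a' b : R) :
    leibnizDefect D (a + a') b = leibnizDefect D a b + leibnizDefect D a' b := by
  simp only [leibnizDefect, add_mul, map_add]
  abel

theorem leibnizDefect_add_right (D : R →+ R) (a b b' : R) :
    leibnizDefect D a (b + b') = leibnizDefect D a b + leibnizDefect D a b' := by
  simp only [leibnizDefect, mul_add, map_add]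
  abel

/-- The Hochschild cocycle identity. -/
theorem leibnizDefect_mul_left_add (D : R → R) (a b c : R) :
    leibnizDefect D (a * b) c + leibnizDefect D a b * c =
      leibnizDefect D a (b * c) + a * leibnizDefect D b c := by
  simp only [leibnizDefect, mul_assoc, mul_sub, sub_mul]
  abel

namespace IsSemiprimeRing

theorem mul_mul_eq_zero_of_add_eq_zero (hR : IsSemiprimeRing R) (h2 : IsSMulRegular R 2)
    {a b : R} (h : ∀ x, a * x * b + b * x * a = 0) (x : R) : a * x * b = 0 := by
  have hswap (y : R) : b * y * a = -(a * y * b) := eq_neg_of_add_eq_zero_right (h y)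
  refine hR _ fun y ↦ h2.right_eq_zero_of_smul ?_
  have hneg : a * x * b * y * (a * x * b) = -(a * x * b * y * (a * x * b)) := by
    calc a * x * b * y * (a * x * b) = a * x * (b * y * a) * x * b := by simp only [mul_assoc]
      _ = -(a * (x * a * y) * b * x * b) := by rw [hswap]; simp only [mul_assoc, mul_neg, neg_mul]
      _ = b * x * a * y * a * x * b := by
        rw [← neg_mul, ← neg_mul, ← hswap]; simp only [mul_assoc]
      _ = -(a * x * b * y * (a * x * b)) := by rw [hswap]; simp only [mul_assoc, neg_mul]
  rw [two_nsmul]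
  exact add_eq_zero_iff_eq_neg.mpr hneg

theorem map_mul_mul_map_eq_zero (hR : IsSemiprimeRing R) {G : Type*} [AddCommGroup G]
    {f g : G →+ R} (h : ∀ a x, f a * x * g a = 0) (a b : G) (x : R) : f a * x * g b = 0 := by
  have hswap (y : R) : f a * y * g b = -(f b * y * g a) := by
    have hadd := h (a + b) y
    simp only [map_add, add_mul, mul_add, h, zero_add, add_zero] at hadd
    exact eq_neg_of_add_eq_zero_right hadd
  refine hR _ fun y ↦ ?_
  calc f a * x * g b * y * (f a * x * g b)
      = -(f a * (x * g b * y * f b * x) * g a) := by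
        rw [mul_assoc (_ * y), ← mul_assoc (f a)]
        nth_rw 2 [hswap]
        simp only [mul_assoc, mul_neg]
    _ = 0 := by rw [h, neg_zero]

theorem mul_comm_of_mul_mul_lie_eq_zero (hR : IsSemiprimeRing R) {z : R}
    (h : ∀ x c d : R, z * x * ⁅c, d⁆ = 0) (r : R) : z * r = r * z := by
  refine sub_eq_zero.mp (hR _ fun y ↦ ?_)
  have h₁ := h (r * y) z r
  have h₂ := h y z r
  rw [Ring.lie_def] at h₁ h₂
  calc (z * r - r * z) * y * (z * r - r * z)
      = z * (r * y) * (z * r - r * z) - r * (z * y * (z * r - r * z)) := by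
        simp only [sub_mul, mul_assoc]
    _ = 0 := by rw [h₁, h₂, mul_zero, sub_zero]

theorem eq_zero_of_pow_three_eq_zero (hR : IsSemiprimeRing R) {z : R}
    (hz : ∀ r, z * r = r * z) (h : z * z * z = 0) : z = 0 := by
  have hsq : z * z = 0 := hR _ fun y ↦ by
    calc z * z * y * (z * z) = z * z * (y * z) * z := by simp only [mul_assoc]
      _ = z * z * z * y * z := by rw [← hz]; simp only [mul_assoc]
      _ = 0 := by rw [h, zero_mul, zero_mul]
  exact hR _ fun y ↦ by rw [mul_assoc, ← hz, ← mul_assoc, hsq, zero_mul]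

end IsSemiprimeRing

namespace IsJordanDerivation

variable {D : R →+ R}

theorem leibnizDefect_swap (hD : IsJordanDerivation D) (a b : R) :
    leibnizDefect D b a = -leibnizDefect D a b := by
  have h := hD a b
  rw [map_add, ← sub_eq_zero] at h
  rw [eq_neg_iff_add_eq_zero, ← h]
  unfold leibnizDefect
  abel

theorem map_mul_self (hD : IsJordanDerivation D) (h2 : IsSMulRegular R 2) (a : R) :
    D (a * a) = D a * a + a * D a :=
  h2 (by simpa only [two_nsmul, map_add] using hD a a)

theorem map_mul_mul_self (hD : IsJordanDerivation D) (h2 : IsSMulRegular R 2) (a b : R) :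
    D (a * b * a) = D a * b * a + a * D b * a + a * b * D a := by
  have hsplit : 2 • (a * b * a) =
      (a * (a * b + b * a) + (a * b + b * a) * a) - (a * a * b + b * (a * a)) := by
    simp only [two_nsmul, mul_add, add_mul, mul_assoc]
    abel
  apply h2
  change 2 • D (a * b * a) = 2 • _
  rw [← map_nsmul, hsplit, map_sub, hD, hD, hD, hD.map_mul_self h2]
  simp only [two_nsmul, mul_add, add_mul, mul_assoc]
  abel

theorem map_mul_mul_add (hD : IsJordanDerivation D) (h2 : IsSMulRegular R 2) (a b c : R) :
    D (a * b * c + c * b * a) = D a * b * c + a * D b * c + a * b * D c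
      + (D c * b * a + c * D b * a + c * b * D a) := by
  have hsplit : a * b * c + c * b * a =
      (a + c) * b * (a + c) - a * b * a - c * b * c := by
    simp only [mul_add, add_mul]
    abel
  rw [hsplit, map_sub, map_sub]
  rw [hD.map_mul_mul_self h2, hD.map_mul_mul_self h2, hD.map_mul_mul_self h2]
  simp only [map_add, mul_add, add_mul]
  abel

/-- Both sides of the identity come from computing `D (abxba + baxab)` in two ways. -/
theorem leibnizDefect_mul_mul_lie_add (hD : IsJordanDerivation D) (h2 : IsSMulRegular R 2)
    (a b x : R) :
    leibnizDefect D a b * x * ⁅a, b⁆ + ⁅a, b⁆ * x * leibnizDefect D a b = 0 := by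
  have houter := hD.map_mul_mul_add h2 (a * b) x (b * a)
  have hinner : D (a * b * x * (b * a) + b * a * x * (a * b)) =
      D (a * (b * x * b) * a) + D (b * (a * x * a) * b) := by
    rw [map_add]
    simp only [mul_assoc]
  have hab : D (a * b) = leibnizDefect D a b + D a * b + a * D b := by
    rw [leibnizDefect]
    abel
  have hba : D (b * a) = -leibnizDefect D a b + D b * a + b * D a := by
    rw [← hD.leibnizDefect_swap, leibnizDefect]
    abel
  rw [hinner] at houter
  simp only [hD.map_mul_mul_self h2, hab, hba] at houter
  rw [← sub_eq_zero] at houter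
  rw [← houter, Ring.lie_def]
  simp only [mul_add, add_mul, mul_sub, sub_mul, mul_neg, neg_mul, mul_assoc]
  abel

theorem leibnizDefect_mul_mul_lie (hD : IsJordanDerivation D) (hR : IsSemiprimeRing R)
    (h2 : IsSMulRegular R 2) (a b x c d : R) : leibnizDefect D a b * x * ⁅c, d⁆ = 0 := by
  have hdiag (a b x : R) : leibnizDefect D a b * x * ⁅a, b⁆ = 0 :=
    hR.mul_mul_eq_zero_of_add_eq_zero h2 (hD.leibnizDefect_mul_mul_lie_add h2 a b) x
  let δ (b : R) : R →+ R := .mk' (leibnizDefect D · b) fun a a' ↦ leibnizDefect_add_left D a a' b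
  let δ' (a : R) : R →+ R := .mk' (leibnizDefect D a) (leibnizDefect_add_right D a)
  let ad (b : R) : R →+ R := .mk' (⁅·, b⁆) fun a a' ↦ by
    simp only [Ring.lie_def, add_mul, mul_add]
    abel
  let ad' (a : R) : R →+ R := .mk' (⁅a, ·⁆) fun b b' ↦ by
    simp only [Ring.lie_def, add_mul, mul_add]
    abel
  have hleft (a c b x : R) : leibnizDefect D a b * x * ⁅c, b⁆ = 0 :=
    hR.map_mul_mul_map_eq_zero (f := δ b) (g := ad b) (fun a x ↦ hdiag a b x) a c x
  exact hR.map_mul_mul_map_eq_zero (f := δ' a) (g := ad' c) (fun b x ↦ hleft a c b x) b d x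

/-- Brešar's theorem. -/
protected theorem map_mul (hD : IsJordanDerivation D) (hR : IsSemiprimeRing R)
    (h2 : IsSMulRegular R 2) (a b : R) : D (a * b) = D a * b + a * D b := by
  set z := leibnizDefect D a b with hz
  have hann (x c d : R) : z * x * ⁅c, d⁆ = 0 := hD.leibnizDefect_mul_mul_lie hR h2 a b x c d
  have hcomm : ∀ r, z * r = r * z := hR.mul_comm_of_mul_mul_lie_eq_zero hann
  have hsq : 2 • (z * z) = z * D ⁅a, b⁆ := by
    have htwo : 2 • z = D ⁅a, b⁆ - ⁅D a, b⁆ - ⁅a, D b⁆ := by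
      rw [two_nsmul]
      nth_rw 2 [← neg_neg z]
      rw [hz, ← hD.leibnizDefect_swap, Ring.lie_def, map_sub]
      simp only [leibnizDefect, Ring.lie_def]
      abel
    have h₁ := hann 1 (D a) b
    have h₂ := hann 1 a (D b)
    rw [mul_one] at h₁ h₂
    rw [← mul_smul_comm, htwo, mul_sub, mul_sub, h₁, h₂, sub_zero, sub_zero]
  have hcube : z * z * D ⁅a, b⁆ = 0 := by
    have hz0 : z * ⁅a, b⁆ = 0 := by simpa using hann 1 a b
    have hJordan := congrArg (z * ·) (hD z ⁅a, b⁆)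
    simp only [← hcomm, hz0, add_zero, map_zero, mul_zero, mul_add, ← mul_assoc, hann,
      zero_mul, zero_add] at hJordan
    exact h2.right_eq_zero_of_smul (by rw [two_nsmul, ← hJordan])
  refine leibnizDefect_eq_zero_iff.mp (hR.eq_zero_of_pow_three_eq_zero hcomm ?_)
  refine h2.right_eq_zero_of_smul ?_
  rw [mul_assoc, ← mul_smul_comm, hsq, ← mul_assoc, hcube]

end IsJordanDerivation

end Semiprime

/-! ### Peirce corners -/

section PeirceCorner

variable {A B : Type*} [Ring A] [Ring B]

/-- A pair of idempotents with sum `1`. Naming both of them makes the notion symmetric, so that a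
statement about a pair can be applied with the two roles exchanged. -/
structure AreComplementary (e f : A) : Prop where
  add_eq_one : e + f = 1
  mul_eq_zero : e * f = 0

namespace AreComplementary

variable {e f : A}

theorem mul_self_left (h : AreComplementary e f) : e * e = e := by
  simpa [mul_add, h.mul_eq_zero] using congrArg (e * ·) h.add_eq_one

theorem mul_self_right (h : AreComplementary e f) : f * f = f := by
  simpa [add_mul, h.mul_eq_zero] using congrArg (· * f) h.add_eq_one

theorem mul_eq_zero' (h : AreComplementary e f) : f * e = 0 := by
  simpa [mul_add, h.mul_self_right] using congrArg (f * ·) h.add_eq_one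

protected theorem symm (h : AreComplementary e f) : AreComplementary f e :=
  ⟨by rw [add_comm, h.add_eq_one], h.mul_eq_zero'⟩

protected theorem map {F : Type*} [FunLike F A B] [RingHomClass F A B]
    (h : AreComplementary e f) (φ : F) :
    AreComplementary (φ e) (φ f) :=
  ⟨by rw [← map_add, h.add_eq_one, map_one], by rw [← map_mul, h.mul_eq_zero, map_zero]⟩

theorem peirce_decomposition (h : AreComplementary e f) (x : A) :
    e * x * e + (e * x * f + f * x * e) + f * x * f = x := by
  calc e * x * e + (e * x * f + f * x * e) + f * x * f = (e + f) * x * (e + f) := by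
        simp only [add_mul, mul_add]
        abel
    _ = x := by rw [h.add_eq_one, one_mul, mul_one]

theorem of_isIdempotentElem (he : IsIdempotentElem e) : AreComplementary e (1 - e) :=
  ⟨add_sub_cancel e 1, he.mul_one_sub_self⟩

end AreComplementary

/-- The Peirce corner `eAf`, for idempotents `e` and `f`, described by its fixed-point equations. -/
def peirceCorner (e f : A) : AddSubgroup A where
  carrier := {a | e * a = a ∧ a * f = a}
  zero_mem' := by simp
  add_mem' := fun ⟨ha, ha'⟩ ⟨hb, hb'⟩ ↦ by simp [mul_add, add_mul, ha, ha', hb, hb']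
  neg_mem' := fun ⟨ha, ha'⟩ ↦ by simp [ha, ha']

section

variable {e f g k a b : A}

theorem mul_mem_peirceCorner (ha : a ∈ peirceCorner e f) (hb : b ∈ peirceCorner g k) :
    a * b ∈ peirceCorner e k :=
  ⟨by rw [← mul_assoc, ha.1], by rw [mul_assoc, hb.2]⟩

theorem mul_mul_mem_peirceCorner (he : e * e = e) (hf : f * f = f) (x : A) :
    e * x * f ∈ peirceCorner e f :=
  ⟨by simp only [← mul_assoc, he], by rw [mul_assoc, hf]⟩

theorem self_mem_peirceCorner (he : e * e = e) : e ∈ peirceCorner e e := ⟨he, he⟩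

theorem smul_mem_peirceCorner {K : Type*} [CommRing K] [Algebra K A] (c : K)
    (ha : a ∈ peirceCorner e f) : c • a ∈ peirceCorner e f :=
  ⟨by rw [mul_smul_comm, ha.1], by rw [smul_mul_assoc, ha.2]⟩

theorem mul_eq_zero_of_mem_peirceCorner (ha : a ∈ peirceCorner e f) (hb : b ∈ peirceCorner g k)
    (hfg : f * g = 0) : a * b = 0 := by
  rw [← ha.2, ← hb.1, mul_assoc, ← mul_assoc f, hfg, zero_mul, mul_zero]

theorem map_mem_peirceCorner {F : Type*} [FunLike F A B] [RingHomClass F A B] (φ : F)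
    (ha : a ∈ peirceCorner e f) :
    φ a ∈ peirceCorner (φ e) (φ f) :=
  ⟨by rw [← map_mul, ha.1], by rw [← map_mul, ha.2]⟩

end

/-- The image of the corner `eAf` under `φ` acts faithfully by multiplication on either side. -/
structure ActsFaithfully (φ : A → B) (e f : A) : Prop where
  mul_eq_zero_of_forall_mul : ∀ x, (∀ t ∈ peirceCorner e f, x * φ t = 0) → x * φ e = 0
  mul_eq_zero_of_forall_mul' : ∀ x, (∀ t ∈ peirceCorner e f, φ t * x = 0) → φ f * x = 0

/-- Complementary idempotents both of whose off-diagonal corners act faithfully through `φ`. -/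
structure IsFaithfulPair (φ : A → B) (e f : A) : Prop extends AreComplementary e f where
  faithful : ActsFaithfully φ e f
  faithful' : ActsFaithfully φ f e

theorem IsFaithfulPair.swap {φ : A → B} {e f : A} (h : IsFaithfulPair φ e f) :
    IsFaithfulPair φ f e :=
  ⟨h.symm, h.faithful', h.faithful⟩

end PeirceCorner

/-! ### Additivity in the presence of a faithful pair of idempotents -/

section XiLie

variable {K A B : Type*} [Field K] [Ring A] [Algebra K A] [Ring B] [Algebra K B]

/-- The `ξ`-Lie product `[a, b]_ξ = ab - ξba`, as a bilinear map. -/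
def xiLie (ξ : K) : A →ₗ[K] A →ₗ[K] A :=
  LinearMap.mul K A - ξ • (LinearMap.mul K A).flip

/-- `Φ` is a nonlinear `ξ`-Lie derivation along `φ`, that is, with values in the target of `φ`
viewed as an `A`-bimodule. Taking for `φ` a quotient map lets one argue modulo an ideal. -/
def IsXiLieDerivation (ξ : K) (φ : A →ₐ[K] B) (Φ : A → B) : Prop :=
  ∀ a b, Φ (xiLie ξ a b) = xiLie ξ (Φ a) (φ b) + xiLie ξ (φ a) (Φ b)

/-- The failure of a map to be additive at a pair of elements. -/
def additivityDefect (Φ : A → B) (a b : A) : B :=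
  Φ (a + b) - Φ a - Φ b

variable {ξ : K}

theorem xiLie_apply (ξ : K) (a b : A) : xiLie ξ a b = a * b - ξ • (b * a) := rfl

theorem map_xiLie (φ : A →ₐ[K] B) (a b : A) : φ (xiLie ξ a b) = xiLie ξ (φ a) (φ b) := by
  simp only [xiLie_apply, map_sub, map_smul, map_mul]

theorem xiLie_eq_mul {a b : A} (h : b * a = 0) : xiLie ξ a b = a * b := by
  rw [xiLie_apply, h, smul_zero, sub_zero]

theorem xiLie_eq_neg_smul {a b : A} (h : a * b = 0) : xiLie ξ a b = -(ξ • (b * a)) := by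
  rw [xiLie_apply, h, zero_sub]

theorem xiLie_eq_zero {a b : A} (hab : a * b = 0) (hba : b * a = 0) : xiLie ξ a b = 0 := by
  rw [xiLie_eq_mul hba, hab]

theorem AreComplementary.mem_peirceCorner_of_xiLie_eq_zero {e f x : A}
    (h : AreComplementary e f) (hξ0 : ξ ≠ 0) (hξ1 : ξ ≠ 1) (hx : xiLie ξ x f = 0) :
    x ∈ peirceCorner e e := by
  have hcomm : x * f = ξ • (f * x) := sub_eq_zero.mp hx
  have hfxe : f * x * e = 0 := by
    have hmul := congrArg (· * e) hcomm
    simp only [mul_assoc, h.mul_eq_zero', mul_zero, smul_mul_assoc] at hmul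
    rw [mul_assoc, (smul_eq_zero_iff_right hξ0).mp hmul.symm]
  have hfxf : f * x * f = f * x := by
    rw [← mul_one (f * x), ← h.add_eq_one, mul_add, hfxe, zero_add, mul_assoc _ f,
      h.mul_self_right]
  have hfx : f * x = 0 := by
    have hmul := congrArg (f * ·) hcomm
    simp only [← mul_assoc, hfxf, mul_smul_comm, h.mul_self_right] at hmul
    refine (smul_eq_zero_iff_right (sub_ne_zero.mpr hξ1.symm)).mp (?_ : (1 - ξ) • (f * x) = 0)
    rw [sub_smul, one_smul, ← hmul, sub_self]
  have hxf : x * f = 0 := by rw [hcomm, hfx, smul_zero]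
  exact ⟨by simpa [add_mul, hfx] using congrArg (· * x) h.add_eq_one,
    by simpa [mul_add, hxf] using congrArg (x * ·) h.add_eq_one⟩

theorem additivityDefect_eq_zero_iff {Φ : A → B} {a b : A} :
    additivityDefect Φ a b = 0 ↔ Φ (a + b) = Φ a + Φ b := by
  rw [additivityDefect, sub_sub, sub_eq_zero]

theorem additivityDefect_comm (Φ : A → B) (a b : A) :
    additivityDefect Φ a b = additivityDefect Φ b a := by
  rw [additivityDefect, additivityDefect, add_comm a, sub_right_comm]

namespace IsXiLieDerivation

variable {φ : A →ₐ[K] B} {Φ : A → B} {e f : A}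

protected theorem map_zero (hΦ : IsXiLieDerivation ξ φ Φ) : Φ 0 = 0 := by
  simpa using hΦ 0 0

theorem additivityDefect_zero_left (hΦ : IsXiLieDerivation ξ φ Φ) (a : A) :
    additivityDefect Φ 0 a = 0 := by
  simp [additivityDefect, hΦ.map_zero]

theorem additivityDefect_zero_right (hΦ : IsXiLieDerivation ξ φ Φ) (a : A) :
    additivityDefect Φ a 0 = 0 := by
  rw [additivityDefect_comm, hΦ.additivityDefect_zero_left]

theorem xiLie_additivityDefect_left (hΦ : IsXiLieDerivation ξ φ Φ) (a b c : A) :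
    xiLie ξ (additivityDefect Φ a b) (φ c) =
      additivityDefect Φ (xiLie ξ a c) (xiLie ξ b c) := by
  have hadd : xiLie ξ a c + xiLie ξ b c = xiLie ξ (a + b) c := by simp
  rw [additivityDefect, additivityDefect, hadd, hΦ, hΦ, hΦ]
  simp only [map_sub, map_add, LinearMap.sub_apply, LinearMap.add_apply]
  abel

theorem xiLie_additivityDefect_right (hΦ : IsXiLieDerivation ξ φ Φ) (a b c : A) :
    xiLie ξ (φ c) (additivityDefect Φ a b) =
      additivityDefect Φ (xiLie ξ c a) (xiLie ξ c b) := by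
  have hadd : xiLie ξ c a + xiLie ξ c b = xiLie ξ c (a + b) := by simp
  rw [additivityDefect, additivityDefect, hadd, hΦ, hΦ, hΦ]
  simp only [map_sub, map_add]
  abel

theorem map_xiLie_add_add (hΦ : IsXiLieDerivation ξ φ Φ) {a a' b b' : A}
    (ha : Φ (a + a') = Φ a + Φ a') (hb : Φ (b + b') = Φ b + Φ b') :
    Φ (xiLie ξ (a + a') (b + b')) =
      Φ (xiLie ξ a b) + Φ (xiLie ξ a b') + Φ (xiLie ξ a' b) + Φ (xiLie ξ a' b') := by
  rw [hΦ, hΦ, hΦ, hΦ, hΦ, ha, hb]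
  simp only [map_add, LinearMap.add_apply]
  abel

theorem additivityDefect_mem_peirceCorner (hΦ : IsXiLieDerivation ξ φ Φ)
    (h : AreComplementary e f) (hξ0 : ξ ≠ 0) (hξ1 : ξ ≠ 1) {a : A} (ha : a ∈ peirceCorner e e)
    (b : A) : additivityDefect Φ a b ∈ peirceCorner (φ e) (φ e) := by
  have hf := self_mem_peirceCorner h.mul_self_right
  refine (h.map φ).mem_peirceCorner_of_xiLie_eq_zero hξ0 hξ1 ?_
  rw [hΦ.xiLie_additivityDefect_left,
    xiLie_eq_zero (mul_eq_zero_of_mem_peirceCorner ha hf h.mul_eq_zero)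
      (mul_eq_zero_of_mem_peirceCorner hf ha h.mul_eq_zero'),
    hΦ.additivityDefect_zero_left]

end IsXiLieDerivation

theorem AreComplementary.diag_eq_zero_of_xiLie_eq {e f x : A} (h : AreComplementary e f)
    (hξ1 : ξ ≠ 1) (hx : xiLie ξ x f = xiLie ξ e x) : e * x * e = 0 ∧ f * x * f = 0 := by
  have hξ : 1 - ξ ≠ 0 := sub_ne_zero.mpr hξ1.symm
  simp only [xiLie_apply] at hx
  constructor
  · refine (smul_eq_zero_iff_right hξ).mp ?_
    calc (1 - ξ) • (e * x * e) = e * (e * x - ξ • (x * e)) * e := by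
          simp only [sub_smul, one_smul, mul_sub, sub_mul, mul_smul_comm, smul_mul_assoc,
            ← mul_assoc, h.mul_self_left]
          simp only [mul_assoc, h.mul_self_left]
      _ = 0 := by
          rw [← hx]
          simp only [mul_sub, sub_mul, mul_smul_comm, smul_mul_assoc, ← mul_assoc, h.mul_eq_zero]
          simp only [mul_assoc, h.mul_eq_zero']
          simp
  · refine (smul_eq_zero_iff_right hξ).mp ?_
    calc (1 - ξ) • (f * x * f) = f * (x * f - ξ • (f * x)) * f := by
          simp only [sub_smul, one_smul, mul_sub, sub_mul, mul_smul_comm, smul_mul_assoc,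
            ← mul_assoc, h.mul_self_right]
          simp only [mul_assoc, h.mul_self_right]
      _ = 0 := by
          rw [hx]
          simp only [mul_sub, sub_mul, mul_smul_comm, smul_mul_assoc, ← mul_assoc, h.mul_eq_zero']
          simp only [mul_assoc, h.mul_eq_zero]
          simp

namespace IsFaithfulPair

variable {φ : A →ₐ[K] B} {e f : A} {x : B}

theorem eq_zero_of_forall_xiLie_eq_zero (h : IsFaithfulPair φ e f)
    (hx : x ∈ peirceCorner (φ e) (φ e))
    (hxt : ∀ t ∈ peirceCorner e f, xiLie ξ x (φ t) = 0) : x = 0 := by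
  rw [← hx.2]
  refine h.faithful.mul_eq_zero_of_forall_mul x fun t ht ↦ ?_
  rw [← hxt t ht, xiLie_eq_mul (mul_eq_zero_of_mem_peirceCorner (map_mem_peirceCorner φ ht) hx
    (h.map φ).mul_eq_zero')]

theorem eq_zero_of_forall_xiLie_eq_zero' (h : IsFaithfulPair φ e f) (hξ0 : ξ ≠ 0)
    (hx : x ∈ peirceCorner (φ e) (φ e))
    (hxt : ∀ t ∈ peirceCorner f e, xiLie ξ x (φ t) = 0) : x = 0 := by
  rw [← hx.1]
  refine h.faithful'.mul_eq_zero_of_forall_mul' x fun t ht ↦ ?_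
  have hxt0 := hxt t ht
  rw [xiLie_eq_neg_smul (mul_eq_zero_of_mem_peirceCorner hx (map_mem_peirceCorner φ ht)
    (h.map φ).mul_eq_zero)] at hxt0
  exact (smul_eq_zero_iff_right hξ0).mp (neg_eq_zero.mp hxt0)

theorem mul_mul_eq_zero_of_forall_xiLie_eq_zero (h : IsFaithfulPair φ e f)
    (hxt : ∀ t ∈ peirceCorner e f, xiLie ξ x (φ t) = 0) : φ f * x * φ e = 0 := by
  refine h.faithful.mul_eq_zero_of_forall_mul (φ f * x) fun t ht ↦ ?_
  have hft : φ f * φ t = 0 := by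
    rw [← (map_mem_peirceCorner φ ht).1, ← mul_assoc, (h.map φ).mul_eq_zero', zero_mul]
  have hcomm : x * φ t = ξ • (φ t * x) := sub_eq_zero.mp (hxt t ht)
  rw [mul_assoc, hcomm, mul_smul_comm, ← mul_assoc, hft, zero_mul, smul_zero]

end IsFaithfulPair

namespace IsXiLieDerivation

variable {φ : A →ₐ[K] B} {Φ : A → B} {e f a b c : A}

theorem map_add_of_mem_diag_of_mem_upper (hΦ : IsXiLieDerivation ξ φ Φ)
    (h : IsFaithfulPair φ e f) (hξ0 : ξ ≠ 0) (hξ1 : ξ ≠ 1)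
    (ha : a ∈ peirceCorner e e) (hb : b ∈ peirceCorner e f) : Φ (a + b) = Φ a + Φ b := by
  refine additivityDefect_eq_zero_iff.mp (h.eq_zero_of_forall_xiLie_eq_zero (ξ := ξ)
    (hΦ.additivityDefect_mem_peirceCorner h.toAreComplementary hξ0 hξ1 ha b) fun t ht ↦ ?_)
  rw [hΦ.xiLie_additivityDefect_left,
    xiLie_eq_zero (mul_eq_zero_of_mem_peirceCorner hb ht h.mul_eq_zero')
      (mul_eq_zero_of_mem_peirceCorner ht hb h.mul_eq_zero'),
    hΦ.additivityDefect_zero_right]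

theorem map_add_of_mem_diag_of_mem_lower (hΦ : IsXiLieDerivation ξ φ Φ)
    (h : IsFaithfulPair φ e f) (hξ0 : ξ ≠ 0) (hξ1 : ξ ≠ 1)
    (ha : a ∈ peirceCorner e e) (hb : b ∈ peirceCorner f e) : Φ (a + b) = Φ a + Φ b := by
  refine additivityDefect_eq_zero_iff.mp (h.eq_zero_of_forall_xiLie_eq_zero' hξ0
    (hΦ.additivityDefect_mem_peirceCorner h.toAreComplementary hξ0 hξ1 ha b) fun t ht ↦ ?_)
  rw [hΦ.xiLie_additivityDefect_left,
    xiLie_eq_zero (mul_eq_zero_of_mem_peirceCorner hb ht h.mul_eq_zero)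
      (mul_eq_zero_of_mem_peirceCorner ht hb h.mul_eq_zero),
    hΦ.additivityDefect_zero_right]

theorem map_add_add_of_mem_upper_triangular (hΦ : IsXiLieDerivation ξ φ Φ)
    (h : IsFaithfulPair φ e f) (hξ0 : ξ ≠ 0) (hξ1 : ξ ≠ 1)
    (ha : a ∈ peirceCorner e e) (hb : b ∈ peirceCorner e f) (hc : c ∈ peirceCorner f f) :
    Φ (a + b + c) = Φ a + Φ b + Φ c := by
  rw [← hΦ.map_add_of_mem_diag_of_mem_upper h hξ0 hξ1 ha hb, ← additivityDefect_eq_zero_iff]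
  set x := additivityDefect Φ (a + b) c with hx
  have hf := self_mem_peirceCorner h.mul_self_right
  have hxf : x ∈ peirceCorner (φ f) (φ f) := by
    rw [hx, additivityDefect_comm]
    exact hΦ.additivityDefect_mem_peirceCorner h.symm hξ0 hξ1 hc (a + b)
  have hxe : x ∈ peirceCorner (φ e) (φ e) := by
    refine (h.map φ).mem_peirceCorner_of_xiLie_eq_zero hξ0 hξ1 ?_
    have hab : xiLie ξ (a + b) f = b := by
      rw [map_add, LinearMap.add_apply,
        xiLie_eq_zero (mul_eq_zero_of_mem_peirceCorner ha hf h.mul_eq_zero)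
          (mul_eq_zero_of_mem_peirceCorner hf ha h.mul_eq_zero'),
        xiLie_eq_mul (mul_eq_zero_of_mem_peirceCorner hf hb h.mul_eq_zero'), hb.2, zero_add]
    have hcf : xiLie ξ c f ∈ peirceCorner f f :=
      sub_mem (mul_mem_peirceCorner hc hf)
        (smul_mem_peirceCorner ξ (mul_mem_peirceCorner hf hc))
    rw [hΦ.xiLie_additivityDefect_left, hab, additivityDefect_comm, additivityDefect_eq_zero_iff]
    exact hΦ.map_add_of_mem_diag_of_mem_lower h.swap hξ0 hξ1 hcf hb
  rw [← hxe.1, ← hxf.1, ← mul_assoc, (h.map φ).mul_eq_zero, zero_mul]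

theorem map_add_of_mem_upper (hΦ : IsXiLieDerivation ξ φ Φ)
    (h : IsFaithfulPair φ e f) (hξ0 : ξ ≠ 0) (hξ1 : ξ ≠ 1)
    (ha : a ∈ peirceCorner e f) (hb : b ∈ peirceCorner e f) : Φ (a + b) = Φ a + Φ b := by
  have he := self_mem_peirceCorner h.mul_self_left
  have hf := self_mem_peirceCorner h.mul_self_right
  have hef : xiLie ξ e f = 0 := xiLie_eq_zero h.mul_eq_zero h.mul_eq_zero'
  have heb : xiLie ξ e b = b := by
    rw [xiLie_eq_mul (mul_eq_zero_of_mem_peirceCorner hb he h.mul_eq_zero'), hb.1]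
  have haf : xiLie ξ a f = a := by
    rw [xiLie_eq_mul (mul_eq_zero_of_mem_peirceCorner hf ha h.mul_eq_zero'), ha.2]
  have hab : xiLie ξ a b = 0 :=
    xiLie_eq_zero (mul_eq_zero_of_mem_peirceCorner ha hb h.mul_eq_zero')
      (mul_eq_zero_of_mem_peirceCorner hb ha h.mul_eq_zero')
  have hsum : xiLie ξ (e + a) (f + b) = a + b := by
    simp only [map_add, LinearMap.add_apply, hef, heb, haf, hab, add_zero, add_comm]
  have hmap := hΦ.map_xiLie_add_add (hΦ.map_add_of_mem_diag_of_mem_upper h hξ0 hξ1 he ha)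
    (hΦ.map_add_of_mem_diag_of_mem_lower h.swap hξ0 hξ1 hf hb)
  rwa [hsum, hef, heb, haf, hab, hΦ.map_zero, zero_add, add_zero, add_comm (Φ b)] at hmap

theorem map_add_of_mem_upper_of_upper_triangular (hΦ : IsXiLieDerivation ξ φ Φ)
    (h : IsFaithfulPair φ e f) (hξ0 : ξ ≠ 0) (hξ1 : ξ ≠ 1)
    (ha : a ∈ peirceCorner e f) (hb : f * b * e = 0) : Φ (a + b) = Φ a + Φ b := by
  have hdiag := mul_mul_mem_peirceCorner h.mul_self_left h.mul_self_left b
  have hupper := mul_mul_mem_peirceCorner h.mul_self_left h.mul_self_right b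
  have hdiag' := mul_mul_mem_peirceCorner h.mul_self_right h.mul_self_right b
  have hdecomp : b = e * b * e + e * b * f + f * b * f := by
    rw [← add_zero (e * b * f), ← hb, h.peirce_decomposition]
  have hsum : a + b = e * b * e + (a + e * b * f) + f * b * f := by
    nth_rw 1 [hdecomp]
    abel
  rw [hsum, hΦ.map_add_add_of_mem_upper_triangular h hξ0 hξ1 hdiag (add_mem ha hupper) hdiag',
    hΦ.map_add_of_mem_upper h hξ0 hξ1 ha hupper]
  nth_rw 4 [hdecomp]
  rw [hΦ.map_add_add_of_mem_upper_triangular h hξ0 hξ1 hdiag hupper hdiag']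
  abel

theorem map_add_of_mem_diag (hΦ : IsXiLieDerivation ξ φ Φ)
    (h : IsFaithfulPair φ e f) (hξ0 : ξ ≠ 0) (hξ1 : ξ ≠ 1)
    (ha : a ∈ peirceCorner e e) (b : A) : Φ (a + b) = Φ a + Φ b := by
  refine additivityDefect_eq_zero_iff.mp (h.eq_zero_of_forall_xiLie_eq_zero (ξ := ξ)
    (hΦ.additivityDefect_mem_peirceCorner h.toAreComplementary hξ0 hξ1 ha b) fun t ht ↦ ?_)
  have htriangular : f * xiLie ξ b t * e = 0 := by
    have hft : f * t = 0 := by rw [← ht.1, ← mul_assoc, h.mul_eq_zero', zero_mul]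
    have hte : t * e = 0 := by rw [← ht.2, mul_assoc, h.mul_eq_zero', mul_zero]
    rw [xiLie_apply, mul_sub, sub_mul, mul_smul_comm, smul_mul_assoc, mul_assoc, mul_assoc b, hte,
      ← mul_assoc f t, hft]
    simp
  rw [hΦ.xiLie_additivityDefect_left,
    xiLie_eq_mul (mul_eq_zero_of_mem_peirceCorner ht ha h.mul_eq_zero'),
    additivityDefect_eq_zero_iff]
  exact hΦ.map_add_of_mem_upper_of_upper_triangular h hξ0 hξ1 (mul_mem_peirceCorner ha ht)
    htriangular

theorem map_add_of_mem_upper_of_mem_lower (hΦ : IsXiLieDerivation ξ φ Φ)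
    (h : IsFaithfulPair φ e f) (hξ1 : ξ ≠ 1)
    (ha : a ∈ peirceCorner e f) (hb : b ∈ peirceCorner f e) : Φ (a + b) = Φ a + Φ b := by
  rw [← additivityDefect_eq_zero_iff]
  set x := additivityDefect Φ a b
  have he := self_mem_peirceCorner h.mul_self_left
  have hf := self_mem_peirceCorner h.mul_self_right
  have hφ := h.map φ
  have hcomm : xiLie ξ x (φ f) = xiLie ξ (φ e) x := by
    rw [hΦ.xiLie_additivityDefect_left, hΦ.xiLie_additivityDefect_right,
      xiLie_eq_mul (mul_eq_zero_of_mem_peirceCorner hf ha h.mul_eq_zero'),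
      xiLie_eq_mul (mul_eq_zero_of_mem_peirceCorner ha he h.mul_eq_zero'),
      xiLie_eq_neg_smul (mul_eq_zero_of_mem_peirceCorner hb hf h.mul_eq_zero),
      xiLie_eq_neg_smul (mul_eq_zero_of_mem_peirceCorner he hb h.mul_eq_zero),
      ha.1, ha.2, hb.1, hb.2]
  obtain ⟨hee, hff⟩ := hφ.diag_eq_zero_of_xiLie_eq hξ1 hcomm
  have hfe : φ f * x * φ e = 0 :=
    h.mul_mul_eq_zero_of_forall_xiLie_eq_zero (ξ := ξ) fun t ht ↦ by
      rw [hΦ.xiLie_additivityDefect_left,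
        xiLie_eq_zero (mul_eq_zero_of_mem_peirceCorner ha ht h.mul_eq_zero')
          (mul_eq_zero_of_mem_peirceCorner ht ha h.mul_eq_zero'),
        hΦ.additivityDefect_zero_left]
  have hef : φ e * x * φ f = 0 :=
    h.swap.mul_mul_eq_zero_of_forall_xiLie_eq_zero (ξ := ξ) fun t ht ↦ by
      rw [hΦ.xiLie_additivityDefect_left,
        xiLie_eq_zero (mul_eq_zero_of_mem_peirceCorner hb ht h.mul_eq_zero)
          (mul_eq_zero_of_mem_peirceCorner ht hb h.mul_eq_zero),
        hΦ.additivityDefect_zero_right]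
  rw [← hφ.peirce_decomposition x, hee, hef, hfe, hff, add_zero, add_zero, add_zero]

theorem map_eq_sum_peirce (hΦ : IsXiLieDerivation ξ φ Φ) (h : IsFaithfulPair φ e f)
    (hξ0 : ξ ≠ 0) (hξ1 : ξ ≠ 1) (x : A) :
    Φ x = Φ (e * x * e) + (Φ (e * x * f) + Φ (f * x * e)) + Φ (f * x * f) := by
  have he := h.mul_self_left
  have hf := h.mul_self_right
  nth_rw 1 [← h.peirce_decomposition x]
  rw [add_comm, hΦ.map_add_of_mem_diag h.swap hξ0 hξ1 (mul_mul_mem_peirceCorner hf hf x),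
    hΦ.map_add_of_mem_diag h hξ0 hξ1 (mul_mul_mem_peirceCorner he he x),
    hΦ.map_add_of_mem_upper_of_mem_lower h hξ1 (mul_mul_mem_peirceCorner he hf x)
      (mul_mul_mem_peirceCorner hf he x), add_comm]

theorem map_add_of_isFaithfulPair (hΦ : IsXiLieDerivation ξ φ Φ) (h : IsFaithfulPair φ e f)
    (hξ0 : ξ ≠ 0) (hξ1 : ξ ≠ 1) (x y : A) : Φ (x + y) = Φ x + Φ y := by
  have he := h.mul_self_left
  have hf := h.mul_self_right
  rw [hΦ.map_eq_sum_peirce h hξ0 hξ1 (x + y), hΦ.map_eq_sum_peirce h hξ0 hξ1 x,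
    hΦ.map_eq_sum_peirce h hξ0 hξ1 y]
  simp only [mul_add, add_mul]
  rw [hΦ.map_add_of_mem_diag h hξ0 hξ1 (mul_mul_mem_peirceCorner he he x),
    hΦ.map_add_of_mem_upper h hξ0 hξ1 (mul_mul_mem_peirceCorner he hf x)
      (mul_mul_mem_peirceCorner he hf y),
    hΦ.map_add_of_mem_upper h.swap hξ0 hξ1 (mul_mul_mem_peirceCorner hf he x)
      (mul_mul_mem_peirceCorner hf he y),
    hΦ.map_add_of_mem_diag h.swap hξ0 hξ1 (mul_mul_mem_peirceCorner hf hf x)]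
  abel

end IsXiLieDerivation

end XiLie

/-! ### Reduction to faithful corners -/

section CornerAnnihilator

variable {R : Type*} [Ring R] {e f : R}

/-- The two-sided ideal of all `x` with `x R (eRf) = 0`. Off-diagonal corners act faithfully on the
quotient by it, whatever the central support of `e` may be. -/
def cornerAnnihilator (e f : R) : Ideal R where
  carrier := {x | ∀ s, ∀ t ∈ peirceCorner e f, x * s * t = 0}
  zero_mem' := by simp
  add_mem' := fun hx hy s t ht ↦ by simp [add_mul, hx s t ht, hy s t ht]
  smul_mem' := fun r x hx s t ht ↦ by
    rw [smul_eq_mul, mul_assoc r, mul_assoc r, hx s t ht, mul_zero]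

instance (e f : R) : (cornerAnnihilator e f).IsTwoSided where
  mul_mem_of_left r hx s t ht := by rw [mul_assoc _ r, hx (r * s) t ht]

/-- The off-diagonal Peirce corners have no common annihilator. -/
def IsPeirceFaithful (R : Type*) [Ring R] : Prop :=
  ∀ x : R, (∀ e f, AreComplementary e f → x ∈ cornerAnnihilator e f) → x = 0

namespace IsSemiprimeRing

theorem cornerAnnihilator_le_swap (hR : IsSemiprimeRing R) (h : AreComplementary e f) :
    cornerAnnihilator e f ≤ cornerAnnihilator f e := fun x hx s t ht ↦ by
  refine hR _ fun y ↦ ?_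
  have hcorner := mul_mul_mem_peirceCorner h.mul_self_left h.mul_self_right (y * x * s)
  calc x * s * t * y * (x * s * t) = x * s * (t * e) * y * (x * s * (f * t)) := by
        rw [ht.1, ht.2]
    _ = x * (s * t) * (e * (y * x * s) * f) * t := by simp only [mul_assoc]
    _ = 0 := by rw [hx (s * t) _ hcorner, zero_mul]

theorem cornerAnnihilator_swap (hR : IsSemiprimeRing R) (h : AreComplementary e f) :
    cornerAnnihilator e f = cornerAnnihilator f e :=
  le_antisymm (hR.cornerAnnihilator_le_swap h) (hR.cornerAnnihilator_le_swap h.symm)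

theorem actsFaithfully_mk (hR : IsSemiprimeRing R) (h : AreComplementary e f) {I : Ideal R}
    [I.IsTwoSided] (hI : I = cornerAnnihilator e f) :
    ActsFaithfully (Ideal.Quotient.mk I) e f where
  mul_eq_zero_of_forall_mul := by
    refine Ideal.Quotient.mk_surjective.forall.mpr fun x hx ↦ ?_
    simp only [← map_mul, Ideal.Quotient.eq_zero_iff_mem, hI] at hx ⊢
    refine fun s t ht ↦ hR _ fun y ↦ ?_
    have hest : e * s * t ∈ peirceCorner e f :=
      mul_assoc e s t ▸ ⟨by rw [← mul_assoc, h.mul_self_left], by rw [mul_assoc, mul_assoc, ht.2]⟩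
    calc x * e * s * t * y * (x * e * s * t) = x * (e * s * t) * (y * x * e * s) * t := by
          simp only [mul_assoc]
      _ = 0 := hx _ hest _ t ht
  mul_eq_zero_of_forall_mul' := by
    refine Ideal.Quotient.mk_surjective.forall.mpr fun x hx ↦ ?_
    simp only [← map_mul, Ideal.Quotient.eq_zero_iff_mem, hI] at hx ⊢
    refine fun s t ht ↦ hR _ fun y ↦ ?_
    have htyf : t * y * f ∈ peirceCorner e f :=
      ⟨by rw [← mul_assoc, ← mul_assoc, ht.1], by rw [mul_assoc, h.mul_self_right]⟩
    calc f * x * s * t * y * (f * x * s * t) = f * x * s * (t * y * f * x * s * t) := by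
          simp only [mul_assoc]
      _ = 0 := by rw [hx _ htyf s t ht, mul_zero]

theorem isFaithfulPair_mk (hR : IsSemiprimeRing R) (h : AreComplementary e f) :
    IsFaithfulPair (Ideal.Quotient.mk (cornerAnnihilator e f)) e f where
  toAreComplementary := h
  faithful := hR.actsFaithfully_mk h rfl
  faithful' := hR.actsFaithfully_mk h.symm (hR.cornerAnnihilator_swap h)

end IsSemiprimeRing

end CornerAnnihilator

section Derivation

variable {K R : Type*} [Field K] [Ring R] [Algebra K R] {ξ : K}

namespace IsXiLieDerivation

protected theorem comp {S : Type*} [Ring S] [Algebra K S] {Φ : R → R}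
    (hΦ : IsXiLieDerivation ξ (AlgHom.id K R) Φ) (π : R →ₐ[K] S) :
    IsXiLieDerivation ξ π (π ∘ Φ) := fun a b ↦ by
  simp only [Function.comp_apply, hΦ a b, map_add, map_xiLie, AlgHom.id_apply]

protected theorem map_add {Φ : R → R} (hΦ : IsXiLieDerivation ξ (AlgHom.id K R) Φ)
    (hR : IsSemiprimeRing R) (hP : IsPeirceFaithful R) (hξ0 : ξ ≠ 0) (hξ1 : ξ ≠ 1) (x y : R) :
    Φ (x + y) = Φ x + Φ y := by
  refine additivityDefect_eq_zero_iff.mp (hP _ fun e f h ↦ ?_)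
  have hadd := (hΦ.comp (Ideal.Quotient.mkₐ K (cornerAnnihilator e f))).map_add_of_isFaithfulPair
    (hR.isFaithfulPair_mk h) hξ0 hξ1 x y
  rw [← Ideal.Quotient.eq_zero_iff_mem, additivityDefect, map_sub, map_sub, sub_sub, sub_eq_zero]
  exact hadd

section Additive

variable {D : R →+ R}

theorem map_smul_eq (hD : IsXiLieDerivation ξ (AlgHom.id K R) D) (b : R) :
    D (ξ • b) = ξ • D b + ξ • (b * D 1) - D 1 * b := by
  have h := hD 1 b
  simp only [xiLie_apply, AlgHom.id_apply, one_mul, mul_one, map_sub] at h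
  rw [← sub_eq_zero] at h ⊢
  rw [← neg_eq_zero, ← h]
  abel

theorem map_one_comm (hD : IsXiLieDerivation ξ (AlgHom.id K R) D) (hξ : 1 + ξ ≠ 0) (b : R) :
    D 1 * b = b * D 1 := by
  have h := hD b 1
  simp only [xiLie_apply, AlgHom.id_apply, one_mul, mul_one, map_sub, hD.map_smul_eq b] at h
  refine sub_eq_zero.mp ((smul_eq_zero_iff_right hξ).mp ?_)
  rw [← sub_eq_zero] at h
  rw [← h, add_smul, one_smul, smul_sub]
  abel

theorem leibnizDefect_eq (hD : IsXiLieDerivation ξ (AlgHom.id K R) D) (hξ : 1 + ξ ≠ 0)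
    (hξ1 : ξ ≠ 1) (a b : R) :
    (1 + ξ) • leibnizDefect D a b = -(D 1 * (b * a + ξ • (a * b))) := by
  have hτ (b : R) : D (ξ • b) = ξ • D b - (1 - ξ) • (D 1 * b) := by
    rw [hD.map_smul_eq, ← hD.map_one_comm hξ, sub_smul, one_smul]
    abel
  have hδ (a b : R) :
      leibnizDefect D a b = ξ • leibnizDefect D b a - (1 - ξ) • (D 1 * (b * a)) := by
    have h := hD a b
    simp only [xiLie_apply, AlgHom.id_apply, map_sub, hτ] at h
    rw [← sub_eq_zero] at h ⊢
    rw [← h, leibnizDefect, leibnizDefect]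
    simp only [smul_sub]
    abel
  refine smul_right_injective R (sub_ne_zero.mpr hξ1.symm) ?_
  have h := hδ a b
  rw [hδ b a] at h
  change (1 - ξ) • (1 + ξ) • leibnizDefect D a b = (1 - ξ) • _
  have hfactor : (1 - ξ) • (1 + ξ) • leibnizDefect D a b =
      leibnizDefect D a b - ξ • ξ • leibnizDefect D a b := by
    module
  rw [hfactor]
  nth_rw 1 [h]
  rw [mul_add, mul_smul_comm]
  module

/-- Feeding `leibnizDefect_eq` into the cocycle identity for `(e, e, x)` with `x ∈ eRf` gives
`D 1 * x = 0`. -/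
protected theorem map_one (hD : IsXiLieDerivation ξ (AlgHom.id K R) D) (hP : IsPeirceFaithful R)
    (hξ : 1 + ξ ≠ 0) (hξ1 : ξ ≠ 1) : D 1 = 0 := by
  refine hP _ fun e f h s x hx ↦ ?_
  have hcocycle : leibnizDefect D e e * x = e * leibnizDefect D e x := by
    have hcocycle := leibnizDefect_mul_left_add D e e x
    rwa [hx.1, h.mul_self_left, add_right_inj] at hcocycle
  have hxe : x * e = 0 := by rw [← hx.2, mul_assoc, h.mul_eq_zero', mul_zero]
  have hcomm := hD.map_one_comm hξ
  have hzero : D 1 * x = 0 := by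
    have hleft : (1 + ξ) • (leibnizDefect D e e * x) = -((1 + ξ) • (D 1 * x)) := by
      rw [← smul_mul_assoc, hD.leibnizDefect_eq hξ hξ1, h.mul_self_left, neg_mul, mul_assoc,
        add_mul, smul_mul_assoc, hx.1, add_smul, one_smul, mul_add, mul_smul_comm]
    have hright : (1 + ξ) • (e * leibnizDefect D e x) = -(ξ • (D 1 * x)) := by
      rw [← mul_smul_comm, hD.leibnizDefect_eq hξ hξ1, hxe, zero_add, mul_neg, ← mul_assoc,
        ← hcomm, mul_assoc, mul_smul_comm, mul_smul_comm, hx.1, hx.1]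
    rwa [hcocycle, hright, neg_inj, add_smul, one_smul, right_eq_add] at hleft
  rw [hcomm, mul_assoc, hzero, mul_zero]

theorem leibnizDefect_eq_zero (hD : IsXiLieDerivation ξ (AlgHom.id K R) D)
    (hP : IsPeirceFaithful R) (hξ : 1 + ξ ≠ 0) (hξ1 : ξ ≠ 1) (a b : R) :
    leibnizDefect D a b = 0 := by
  refine (smul_eq_zero_iff_right hξ).mp ?_
  rw [hD.leibnizDefect_eq hξ hξ1, hD.map_one hP hξ hξ1, zero_mul, neg_zero]

theorem isJordanDerivation (hD : IsXiLieDerivation (-1 : K) (AlgHom.id K R) D) :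
    IsJordanDerivation D := fun a b ↦ by
  have h := hD a b
  simp only [xiLie_apply, AlgHom.id_apply, neg_smul, one_smul, sub_neg_eq_add] at h
  rw [h]
  abel

theorem map_mul_and_map_smul (hD : IsXiLieDerivation ξ (AlgHom.id K R) D)
    (hR : IsSemiprimeRing R) (hP : IsPeirceFaithful R) (hξ1 : ξ ≠ 1) :
    (∀ a b, D (a * b) = D a * b + a * D b) ∧ ∀ a, D (ξ • a) = ξ • D a := by
  obtain hξ | hξ := eq_or_ne (1 + ξ) 0
  · obtain rfl : ξ = -1 := (neg_eq_of_add_eq_zero_right hξ).symm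
    have h2 : (2 : K) ≠ 0 := fun h2 ↦
      hξ1 (neg_eq_of_add_eq_zero_right (by rw [one_add_one_eq_two, h2]))
    have hreg : IsSMulRegular R 2 := fun a b hab ↦
      smul_right_injective R h2 (by simpa only [two_smul] using hab)
    exact ⟨hD.isJordanDerivation.map_mul hR hreg, fun a ↦ by simp⟩
  · refine ⟨fun a b ↦ leibnizDefect_eq_zero_iff.mp (hD.leibnizDefect_eq_zero hP hξ hξ1 a b),
      fun a ↦ ?_⟩
    rw [hD.map_smul_eq, hD.map_one hP hξ hξ1, mul_zero, zero_mul, smul_zero, add_zero, sub_zero]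

end Additive

end IsXiLieDerivation

theorem nonlinear_xiLie_derivation_additive_general {K A : Type*} [Field K] [Ring A] [Algebra K A]
    (R : Subalgebra K A) (hR : IsSemiprimeRing R) (hP : IsPeirceFaithful R)
    {ξ : K} (hξ0 : ξ ≠ 0) (hξ1 : ξ ≠ 1) (Φ : A → A) (hmaps : ∀ a ∈ R, Φ a ∈ R)
    (hlie : ∀ a ∈ R, ∀ b ∈ R,
      Φ (a * b - ξ • (b * a)) = (Φ a * b - ξ • (b * Φ a)) + (a * Φ b - ξ • (Φ b * a))) :
    (∀ a ∈ R, ∀ b ∈ R, Φ (a + b) = Φ a + Φ b) ∧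
      (∀ a ∈ R, ∀ b ∈ R, Φ (a * b) = Φ a * b + a * Φ b) ∧
      (∀ a ∈ R, Φ (ξ • a) = ξ • Φ a) := by
  let Ψ (a : R) : R := ⟨Φ a, hmaps a a.2⟩
  have hΨ : IsXiLieDerivation ξ (AlgHom.id K R) Ψ := fun a b ↦ Subtype.ext (hlie a a.2 b b.2)
  have hadd := hΨ.map_add hR hP hξ0 hξ1
  let D : R →+ R := .mk' Ψ hadd
  obtain ⟨hmul, hsmul⟩ := IsXiLieDerivation.map_mul_and_map_smul (D := D) hΨ hR hP hξ1
  exact ⟨fun a ha b hb ↦ congrArg Subtype.val (hadd ⟨a, ha⟩ ⟨b, hb⟩),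
    fun a ha b hb ↦ congrArg Subtype.val (hmul ⟨a, ha⟩ ⟨b, hb⟩),
    fun a ha ↦ congrArg Subtype.val (hsmul ⟨a, ha⟩)⟩

end Derivation

/-! ### Projections in von Neumann algebras -/

section VonNeumann

open ContinuousLinearMap

theorem isSemiprimeRing_starSubalgebra {A : Type*} [NormedRing A] [StarRing A] [CStarRing A]
    [Algebra ℂ A] [StarModule ℂ A] (S : StarSubalgebra ℂ A) : IsSemiprimeRing S := fun x hx ↦ by
  have hx' : (x * star x) * star (x * star x) = 0 := by
    rw [star_mul, star_star, mul_assoc x, ← mul_assoc (star x), ← mul_assoc, ← mul_assoc, hx,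
      zero_mul]
  have hval : (x : A) * star (x : A) * star ((x : A) * star (x : A)) = 0 :=
    congrArg Subtype.val hx'
  rw [CStarRing.mul_star_self_eq_zero_iff, CStarRing.mul_star_self_eq_zero_iff] at hval
  exact Subtype.ext hval

variable {M : VonNeumannAlgebra H} {V : Submodule ℂ H} {A P : H →L[ℂ] H}

theorem VNProjection.one_sub (hP : VNProjection M P) : VNProjection M (1 - P) :=
  ⟨sub_mem (one_mem M) hP.1, (IsSelfAdjoint.one _).sub hP.2.1, IsIdempotentElem.one_sub hP.2.2⟩

theorem VNCentralProjection.one_sub (hP : VNCentralProjection M P) :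
    VNCentralProjection M (1 - P) :=
  ⟨hP.1.one_sub, fun T hT ↦ by rw [sub_mul, mul_sub, hP.2 T hT, one_mul, mul_one]⟩

theorem starProjection_topologicalClosure_mem (hV : ∀ A ∈ M.commutant, ∀ v ∈ V, A v ∈ V) :
    V.topologicalClosure.starProjection ∈ M := by
  rw [VonNeumannAlgebra.IsStarProjection.mem_iff isStarProjection_starProjection]
  intro A hA
  rw [Module.End.mem_invtSubmodule, Submodule.range_starProjection]
  exact fun v hv ↦ map_mem_closure A.continuous hv (hV A hA)

theorem vnProjection_starProjection_topologicalClosure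
    (hV : ∀ A ∈ M.commutant, ∀ v ∈ V, A v ∈ V) :
    VNProjection M V.topologicalClosure.starProjection :=
  ⟨starProjection_topologicalClosure_mem hV, isStarProjection_starProjection.isSelfAdjoint,
    isStarProjection_starProjection.isIdempotentElem⟩

theorem starProjection_topologicalClosure_mul_eq_self (hA : ∀ v, A v ∈ V) :
    V.topologicalClosure.starProjection * A = A := by
  ext v
  exact Submodule.starProjection_eq_self_iff.mpr (V.le_topologicalClosure (hA v))

theorem mul_starProjection_topologicalClosure_eq_zero (hA : ∀ v ∈ V, A v = 0) :
    A * V.topologicalClosure.starProjection = 0 := by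
  ext v
  exact Set.EqOn.closure (g := 0) hA A.continuous continuous_zero
    (V.topologicalClosure.starProjection_apply_mem v)

theorem apply_comm_of_mem_commutant {T : H →L[ℂ] H} (hA : A ∈ M.commutant) (hT : T ∈ M) (v : H) :
    A (T v) = T (A v) :=
  (DFunLike.congr_fun (VonNeumannAlgebra.mem_commutant_iff.mp hA T hT) v).symm

theorem smul_mem_vonNeumannAlgebra (c : ℂ) (hA : A ∈ M) : c • A ∈ M :=
  M.toStarSubalgebra.smul_mem hA c

theorem posPart_mem_vonNeumannAlgebra (hA : A ∈ M) : A⁺ ∈ M := by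
  rw [← VonNeumannAlgebra.commutant_commutant M, VonNeumannAlgebra.mem_commutant_iff]
  intro T hT
  have hcomm : Commute A T := VonNeumannAlgebra.mem_commutant_iff.mp hT A hA
  rw [CFC.posPart_def]
  exact (hcomm.cfcₙ_real _).symm

theorem exists_vnProjection_posPart (hA : A ∈ M) :
    ∃ F, VNProjection M F ∧ F * A⁺ = A⁺ ∧ A⁺ * F = A⁺ ∧ F * A⁻ = 0 ∧ A⁻ * F = 0 := by
  have hV : ∀ T ∈ M.commutant, ∀ v ∈ (A⁺).range, T v ∈ (A⁺).range := by
    rintro T hT _ ⟨w, rfl⟩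
    exact ⟨T w, (apply_comm_of_mem_commutant hT (posPart_mem_vonNeumannAlgebra hA) w).symm⟩
  have hF := vnProjection_starProjection_topologicalClosure hV
  set F := (A⁺).range.topologicalClosure.starProjection
  have hpos : F * A⁺ = A⁺ := starProjection_topologicalClosure_mul_eq_self fun v ↦ ⟨v, rfl⟩
  have hneg : A⁻ * F = 0 := mul_starProjection_topologicalClosure_eq_zero (by
    rintro _ ⟨w, rfl⟩
    exact DFunLike.congr_fun (CFC.negPart_mul_posPart A) w)
  have hsapos : IsSelfAdjoint (A⁺) := (CFC.posPart_nonneg A).isSelfAdjoint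
  have hsaneg : IsSelfAdjoint (A⁻) := (CFC.negPart_nonneg A).isSelfAdjoint
  refine ⟨F, hF, hpos, ?_, ?_, hneg⟩
  · simpa [hF.2.1.star_eq, hsapos.star_eq] using congrArg star hpos
  · simpa [hF.2.1.star_eq, hsaneg.star_eq] using congrArg star hneg

/-- The projection is the spectral projection of `A` for the interval `(c, 2c]`. -/
theorem exists_vnProjection_sub_smul_between (hA : A ∈ M) (hA0 : 0 ≤ A) {c : ℝ}
    (hAc : A ≤ (2 * c) • 1) :
    ∃ F, VNProjection M F ∧ 0 ≤ A - c • F ∧ A - c • F ≤ c • 1 := by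
  set B := A - c • (1 : H →L[ℂ] H) with hB
  have hBM : B ∈ M := sub_mem hA (smul_mem_vonNeumannAlgebra (c : ℂ) (one_mem M))
  have hBsa : IsSelfAdjoint B :=
    hA0.isSelfAdjoint.sub (.smul (IsSelfAdjoint.all c) (.one _))
  obtain ⟨F, hF, hFp, hpF, hFn, hnF⟩ := exists_vnProjection_posPart hBM
  have hsplit : A = B⁺ - B⁻ + c • 1 := by
    rw [CFC.posPart_sub_negPart B hBsa, hB, sub_add_cancel]
  clear_value B
  refine ⟨F, hF, ?_, ?_⟩
  · have hlower : A - c • F = B⁺ + (1 - F) * A * (1 - F) := by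
      subst hsplit
      simp only [sub_mul, mul_sub, add_mul, mul_add, one_mul, mul_one, hFp, hpF, hFn, hnF,
        smul_mul_assoc, mul_smul_comm, hF.2.2, zero_mul, smul_sub]
      abel
    rw [hlower]
    exact add_nonneg (CFC.posPart_nonneg B) (hF.one_sub.2.1.conjugate_nonneg hA0)
  · have hupper : c • 1 - (A - c • F) = F * ((2 * c) • 1 - A) * F + B⁻ := by
      subst hsplit
      simp only [sub_mul, mul_sub, add_mul, mul_add, mul_one, hFp, hpF, hFn,
        smul_mul_assoc, mul_smul_comm, hF.2.2, zero_mul, two_mul, add_smul]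
      abel
    rw [← sub_nonneg, hupper]
    exact add_nonneg (hF.2.1.conjugate_nonneg (sub_nonneg.mpr hAc)) (CFC.negPart_nonneg B)

theorem exists_mem_span_vnProjection_sub_between (n : ℕ) (hA : A ∈ M) (hA0 : 0 ≤ A) {r : ℝ}
    (hAr : A ≤ r • 1) :
    ∃ X ∈ Submodule.span ℂ {P | VNProjection M P}, 0 ≤ A - X ∧ A - X ≤ (r / 2 ^ n) • 1 := by
  induction n generalizing A r with
  | zero => exact ⟨0, zero_mem _, by simpa using hA0, by simpa using hAr⟩
  | succ n ih =>
    obtain ⟨F, hF, hlower, hupper⟩ := exists_vnProjection_sub_smul_between hA hA0 (c := r / 2)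
      (by rwa [mul_div_cancel₀ r two_ne_zero])
    have hFM : (r / 2) • F ∈ M := smul_mem_vonNeumannAlgebra ((r / 2 : ℝ) : ℂ) hF.1
    obtain ⟨X, hX, hX0, hXr⟩ := ih (sub_mem hA hFM) hlower hupper
    refine ⟨(r / 2) • F + X,
      add_mem (Submodule.smul_of_tower_mem _ _ (Submodule.subset_span hF)) hX, ?_, ?_⟩
    · rwa [← sub_sub]
    · rwa [← sub_sub, pow_succ', ← div_div]

theorem mem_closure_span_vnProjection_of_nonneg (hA : A ∈ M) (hA0 : 0 ≤ A) :
    A ∈ (Submodule.span ℂ {P | VNProjection M P}).topologicalClosure := by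
  refine Metric.mem_closure_iff.mpr fun ε hε ↦ ?_
  have hAr : A ≤ ‖A‖ • (1 : H →L[ℂ] H) := by
    rw [← Algebra.algebraMap_eq_smul_one]
    exact hA0.isSelfAdjoint.le_algebraMap_norm_self
  have hlim : Filter.Tendsto (fun n : ℕ ↦ ‖A‖ / 2 ^ n) Filter.atTop (nhds 0) :=
    tendsto_const_nhds.div_atTop (tendsto_pow_atTop_atTop_of_one_lt one_lt_two)
  obtain ⟨n, hn⟩ := (hlim.eventually_lt_const hε).exists
  obtain ⟨X, hX, hX0, hXr⟩ := exists_mem_span_vnProjection_sub_between n hA hA0 hAr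
  refine ⟨X, hX, lt_of_le_of_lt ?_ hn⟩
  rw [dist_eq_norm, CStarAlgebra.norm_le_iff_le_algebraMap _ (by positivity) hX0,
    Algebra.algebraMap_eq_smul_one]
  exact hXr

theorem mem_closure_span_vnProjection_of_isSelfAdjoint (hA : A ∈ M) (hsa : IsSelfAdjoint A) :
    A ∈ (Submodule.span ℂ {P | VNProjection M P}).topologicalClosure := by
  have hpos : A⁺ ∈ M := posPart_mem_vonNeumannAlgebra hA
  have hneg : A⁻ ∈ M := by
    rw [← CFC.posPart_neg]
    exact posPart_mem_vonNeumannAlgebra (neg_mem hA)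
  rw [← CFC.posPart_sub_negPart A hsa]
  exact sub_mem (mem_closure_span_vnProjection_of_nonneg hpos (CFC.posPart_nonneg A))
    (mem_closure_span_vnProjection_of_nonneg hneg (CFC.negPart_nonneg A))

theorem mem_closure_span_vnProjection (hA : A ∈ M) :
    A ∈ (Submodule.span ℂ {P | VNProjection M P}).topologicalClosure := by
  have hre : (realPart A : H →L[ℂ] H) ∈ M := by
    rw [realPart_apply_coe]
    exact smul_mem_vonNeumannAlgebra ((2⁻¹ : ℝ) : ℂ) (add_mem hA (star_mem hA))
  have him : (imaginaryPart A : H →L[ℂ] H) ∈ M := by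
    rw [imaginaryPart_apply_coe]
    exact smul_mem_vonNeumannAlgebra _
      (smul_mem_vonNeumannAlgebra ((2⁻¹ : ℝ) : ℂ) (sub_mem hA (star_mem hA)))
  rw [← realPart_add_I_smul_imaginaryPart A]
  exact add_mem (mem_closure_span_vnProjection_of_isSelfAdjoint hre (realPart A).2)
    (Submodule.smul_mem _ _
      (mem_closure_span_vnProjection_of_isSelfAdjoint him (imaginaryPart A).2))

theorem mul_lie_eq_zero_of_forall_vnProjection {Z B : H →L[ℂ] H}
    (h : ∀ P, VNProjection M P → Z * (P * B - B * P) = 0) (hA : A ∈ M) :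
    Z * (A * B - B * A) = 0 := by
  have heq : Set.EqOn (mul ℂ (H →L[ℂ] H) Z ∘L (mul ℂ (H →L[ℂ] H)).flip B)
      (mul ℂ (H →L[ℂ] H) Z ∘L mul ℂ (H →L[ℂ] H) B) {P | VNProjection M P} := fun P hP ↦
    sub_eq_zero.mp (by simpa [mul_sub] using h P hP)
  rw [mul_sub, sub_eq_zero]
  exact eqOn_closure_span heq (mem_closure_span_vnProjection hA)

/-- The projection onto the closed span of `M S H`. -/
theorem exists_vnCentralProjection_mul_eq_self {S : Set (H →L[ℂ] H)} (hS : ∀ s ∈ S, s ∈ M) :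
    ∃ E, VNCentralProjection M E ∧ (∀ s ∈ S, E * s = s) ∧
      ∀ x, (∀ T ∈ M, ∀ s ∈ S, x * T * s = 0) → x * E = 0 := by
  let V : Submodule ℂ H := ⨆ T ∈ M, ⨆ s ∈ S, (T * s).range
  have hmem {T s : H →L[ℂ] H} (hT : T ∈ M) (hs : s ∈ S) (w : H) : T (s w) ∈ V := by
    refine Submodule.mem_iSup_of_mem T (Submodule.mem_iSup_of_mem hT
      (Submodule.mem_iSup_of_mem s (Submodule.mem_iSup_of_mem hs ⟨w, rfl⟩)))
  have hle {W : Submodule ℂ H} {x : H →L[ℂ] H} (h : ∀ T ∈ M, ∀ s ∈ S, ∀ w, x (T (s w)) ∈ W) :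
      ∀ v ∈ V, x v ∈ W := by
    refine (iSup₂_le fun T hT ↦ iSup₂_le fun s hs ↦ ?_ : V ≤ W.comap (x : H →ₗ[ℂ] H))
    rintro _ ⟨w, rfl⟩
    exact h T hT s hs w
  have hinv : ∀ x ∈ M.commutant, ∀ v ∈ V, x v ∈ V := fun x hx ↦ hle fun T hT s hs w ↦ by
    rw [apply_comm_of_mem_commutant hx hT, apply_comm_of_mem_commutant hx (hS s hs)]
    exact hmem hT hs _
  have hinv' : ∀ x ∈ M.commutant.commutant, ∀ v ∈ V, x v ∈ V := by
    rw [VonNeumannAlgebra.commutant_commutant]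
    exact fun x hx ↦ hle fun T hT s hs w ↦ hmem (mul_mem hx hT) hs w
  refine ⟨V.topologicalClosure.starProjection,
    ⟨vnProjection_starProjection_topologicalClosure hinv, fun T hT ↦ ?_⟩, fun s hs ↦ ?_,
    fun x hx ↦ ?_⟩
  · exact (VonNeumannAlgebra.mem_commutant_iff.mp
      (starProjection_topologicalClosure_mem hinv') T hT).symm
  · exact starProjection_topologicalClosure_mul_eq_self (hmem (one_mem M) hs)
  · exact mul_starProjection_topologicalClosure_eq_zero (hle (W := ⊥) fun T hT s hs w ↦
      (Submodule.mem_bot ℂ).mpr (DFunLike.congr_fun (hx T hT s hs) w))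

theorem VNNoTypeI1.eq_zero_of_forall_mul_mul_eq_zero (hM : VNNoTypeI1 M) {x : H →L[ℂ] H}
    (hx : ∀ P, VNProjection M P → ∀ S ∈ M, ∀ T ∈ M, x * S * (P * T * (1 - P)) = 0) : x = 0 := by
  obtain ⟨E, hE, hEself, hEzero⟩ := exists_vnCentralProjection_mul_eq_self (M := M)
    (S := {s | ∃ P T, VNProjection M P ∧ T ∈ M ∧ s = P * T * (1 - P)}) (by
      rintro _ ⟨P, T, hP, hT, rfl⟩
      exact mul_mem (mul_mem hP.1 hT) hP.one_sub.1)
  have hcorner {P T : H →L[ℂ] H} (hP : VNProjection M P) (hT : T ∈ M) :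
      (1 - E) * (P * T * (1 - P)) = 0 := by
    rw [sub_mul, one_mul, hEself _ ⟨P, T, hP, hT, rfl⟩, sub_self]
  have hcomm {T : H →L[ℂ] H} (hT : T ∈ M) (P : H →L[ℂ] H) (hP : VNProjection M P) :
      (1 - E) * (P * T - T * P) = 0 := by
    have hsplit : P * T - T * P = P * T * (1 - P) - (1 - P) * T * (1 - (1 - P)) := by noncomm_ring
    rw [hsplit, mul_sub, hcorner hP hT, hcorner hP.one_sub hT, sub_zero]
  have hE1 : 1 - E = 0 := by
    by_contra hne
    obtain ⟨A, hA, B, hB, hAB⟩ := hM _ hE.one_sub hne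
    exact hAB (mul_lie_eq_zero_of_forall_vnProjection (hcomm hB) hA)
  rw [← mul_one x, sub_eq_zero.mp hE1]
  refine hEzero x ?_
  rintro S hS _ ⟨P, T, hP, hT, rfl⟩
  exact hx P hP S hS T hT

theorem VNNoTypeI1.isPeirceFaithful (hM : VNNoTypeI1 M) :
    IsPeirceFaithful M.toStarSubalgebra := fun x hx ↦ by
  refine Subtype.ext (hM.eq_zero_of_forall_mul_mul_eq_zero fun P hP S hS T hT ↦ ?_)
  have h : AreComplementary (⟨P, hP.1⟩ : M.toStarSubalgebra) (1 - ⟨P, hP.1⟩) :=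
    .of_isIdempotentElem (Subtype.ext hP.2.2)
  exact congrArg Subtype.val (hx _ _ h ⟨S, hS⟩ _
    (mul_mul_mem_peirceCorner h.mul_self_left h.mul_self_right ⟨T, hT⟩))

end VonNeumann

/-- **Theorem 1.2.** Every nonlinear ξ-Lie derivation (ξ ≠ 0, 1) on a von Neumann
algebra with no central summands of type I₁ is an additive derivation with
`Φ (ξ • T) = ξ • Φ T`. -/
theorem nonlinear_xiLie_derivation_additive (M : VonNeumannAlgebra H)
    (hM : VNNoTypeI1 M) (ξ : ℂ) (hξ0 : ξ ≠ 0) (hξ1 : ξ ≠ 1)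
    (Φ : (H →L[ℂ] H) → (H →L[ℂ] H))
    (hmaps : ∀ T ∈ M, Φ T ∈ M)
    (hlie : ∀ A ∈ M, ∀ B ∈ M,
      Φ (A * B - ξ • (B * A)) =
        (Φ A * B - ξ • (B * Φ A)) + (A * Φ B - ξ • (Φ B * A))) :
    (∀ T ∈ M, ∀ S ∈ M, Φ (T + S) = Φ T + Φ S) ∧
      (∀ A ∈ M, ∀ B ∈ M, Φ (A * B) = Φ A * B + A * Φ B) ∧
      (∀ T ∈ M, Φ (ξ • T) = ξ • Φ T) := by
  exact nonlinear_xiLie_derivation_additive_general M.toStarSubalgebra.toSubalgebra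
    (isSemiprimeRing_starSubalgebra M.toStarSubalgebra) hM.isPeirceFaithful hξ0 hξ1 Φ hmaps hlie
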